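/- arXiv:1607.05889 — 4 statements merged into one kernel-verified Lean document; each statement's English description precedes it below -/
import Mathlib

section
/- Let ν₁, ν₂ be multiplicative characters of F_q, set χ₁ = ν₁⁴, χ₂ = ν₂⁴ and μ = ν₁ν₂. Then T(χ₁,χ₂) = (A₄(−a)/q) · Σ_{m=0}^{3} Σ_{n=0}^{3} (μ̄ A̅₄^{m+n})(a) · G(ν₁A₄^{n−1}) · G(ν₁A₄^{n}) · G(ν₂A₄^{m−1}) · G(ν₂A₄^{m}), where character powers A₄^{n} for negative n are interpreted via A₄^{−1} = A̅₄. -/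
/-!
The theorem follows from Katz's identity `q A₄(-a) P(j,k) = K(j) K(k)` for `j, k ≠ 0`, where
`K(j) = ∑_{x ≠ 0} A₄(x) ψ(x + a j⁴/x)` (`katz_identity`). Granting it, `T(ν₁⁴, ν₂⁴)` is a product of
two Mellin transforms of `K`, and each is a sum of four products of two Gauss sums, since `K(j)`
depends only on `j⁴` (`mellin_katzSum`); shifting the summation index by one gives the stated form.

Katz's identity is proved by writing both sides as averages of Kloosterman sums
`Kl(α,β) = ∑_{c ≠ 0} ψ(αc + β/c)`. Symmetrizing the double sum `K(j) K(k)` under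
`(X, Y) ↦ (a j⁴/X, a k⁴/Y)` and parametrizing the surviving pairs as `(a x/c, c x)` gives
`2 K(j) K(k) = A₄(a) ∑_x φ(x) Kl(x + j⁴/x, a(x + k⁴/x))` (`katzSum_mul`). Opening
`G(φ) φ(a/x - x)` as a twisted Gauss sum turns the sum in `P(j,k)` into
`∑_y φ(y) Kl((j+k)² - y, a((j-k)² + y))` (`mixed_eq`). A Kloosterman sum depends only on `αβ` unless
`α = β = 0` (`kloos_eq`). With `i² = -1` and
`y = i(x - j²k²/x) + 2jk = (i/x)(x - ijk)²`, both products `αβ` equal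
`a((j²+k²)² - (y - 2jk)²)`, while `φ(y) = φ(i) φ(x)` if `y ≠ 0`; as `x ↦ y` takes each value
`1 + φ(y(4jk - y))` times and the Kloosterman terms are invariant under `y ↦ 4jk - y`, the two
averages agree up to the factor `2φ(i)` (`core_eq`). The degenerate sums `Kl(0,0)` account for the
delta terms of `P(j,k)`, and `φ(i) = A₄(i²) = A₄(-1)`.
-/

open Finset

noncomputable section

variable {F : Type} [Field F] [Fintype F] [DecidableEq F]

/-- Katz's mixed character sum `P(j,k)`; the quadratic character `φ` is `A₄ ^ 2`. -/
def Pkatz (ψ : AddChar F ℂ) (A₄ : MulChar F ℂ) (a : F) (j k : F) : ℂ :=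
  (if j = k then 1 else 0) + (A₄ ^ 2) (-1) * (if j = -k then 1 else 0) +
    (gaussSum (A₄ ^ 2) ψ)⁻¹ *
      ∑ x ∈ univ.filter (fun x : F => x ≠ 0),
        (A₄ ^ 2) (a / x - x) * ψ (x * (j + k) ^ 2 + (a / x) * (j - k) ^ 2)

/-- Katz's sums `V(j)`. -/
def Vkatz (ψ : AddChar F ℂ) (A₄ : MulChar F ℂ) (a : F) (τ : ℂ) (j : F) : ℂ :=
  if j = 0 then gaussSum A₄ ψ / τ + τ / gaussSum A₄ ψ
  else τ⁻¹ * ∑ x ∈ univ.filter (fun x : F => x ≠ 0), A₄ x * ψ (x + a * j ^ 4 / x)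

/-- The finite field hypergeometric function `₂F₁(A,B;C|x)`. -/
def hyp2F1 (A B C : MulChar F ℂ) (x : F) : ℂ :=
  ((1 : MulChar F ℂ) x / (Fintype.card F : ℂ)) *
    ∑ y : F, B y * (B⁻¹ * C) (y - 1) * A⁻¹ (1 - x * y)

/-- The Jacobi sum `J(A,B)`. -/
def Jsum (A B : MulChar F ℂ) : ℂ := ∑ y : F, A y * B (1 - y)

/-- The sum `h(D,j)`; the quadratic character `φ` is `A₄ ^ 2`. -/
def hKatz (A₄ D : MulChar F ℂ) (j : F) : ℂ :=
  ∑ x ∈ univ.filter (fun x : F => x ≠ 0),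
    D x * (A₄ ^ 2) (1 - x) * ((D⁻¹ ^ 2) * A₄ ^ 2) (x * (j + 1) ^ 2 + (j - 1) ^ 2)

/-- The sum `H(λ₁)`; the quadratic character `φ` is `A₄ ^ 2`. -/
def Hkatz (A₄ lam : MulChar F ℂ) (a : F) : ℂ :=
  ∑ p ∈ (univ ×ˢ univ).filter
      (fun p : F × F => p.1 ≠ 0 ∧ p.2 ≠ 0 ∧
        p.2 * (p.1 + 1) ^ 2 + a * (p.1 - 1) ^ 2 / p.2 = 0),
    (lam ^ 2 * A₄ ^ 2) p.1 * (A₄ ^ 2) (p.2 - a / p.2)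

/-- The Mellin transform `S(χ)` of the sums `V(j)`. -/
def Smel (ψ : AddChar F ℂ) (A₄ : MulChar F ℂ) (a : F) (τ : ℂ) (χ : MulChar F ℂ) : ℂ :=
  ∑ j ∈ univ.filter (fun j : F => j ≠ 0), χ j * Vkatz ψ A₄ a τ j

/-- The Mellin transform `T(χ)` of the sums `P(j,0)`. -/
def Tmel (ψ : AddChar F ℂ) (A₄ : MulChar F ℂ) (a : F) (χ : MulChar F ℂ) : ℂ :=
  ∑ j ∈ univ.filter (fun j : F => j ≠ 0), χ j * Pkatz ψ A₄ a j 0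

/-- The double Mellin transform `T(χ₁,χ₂)` of the sums `P(j,k)`. -/
def Tmel2 (ψ : AddChar F ℂ) (A₄ : MulChar F ℂ) (a : F) (χ₁ χ₂ : MulChar F ℂ) : ℂ :=
  ∑ j ∈ univ.filter (fun j : F => j ≠ 0), ∑ k ∈ univ.filter (fun k : F => k ≠ 0),
    χ₁ j * χ₂ k * Pkatz ψ A₄ a j k

end

section Helpers

set_option linter.unusedSectionVars false

variable {F : Type} [Field F] [Fintype F] [DecidableEq F]

/-- The Kloosterman sum `∑_{c ≠ 0} ψ(αc + β/c)`; either parameter may vanish. -/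
noncomputable def kloos (ψ : AddChar F ℂ) (α β : F) : ℂ :=
  ∑ c ∈ univ.filter (fun c : F => c ≠ 0), ψ (α * c + β / c)

/-- The unnormalized Katz sum `τ V(j) = ∑_{x ≠ 0} A₄(x) ψ(x + a j⁴/x)` as a function of `t = j⁴`. -/
noncomputable def katzSum (ψ : AddChar F ℂ) (A₄ : MulChar F ℂ) (a t : F) : ℂ :=
  ∑ x ∈ univ.filter (fun x : F => x ≠ 0), A₄ x * ψ (x + a * t / x)

/-! ### The quadratic character -/

lemma quad_sq_self {φ : MulChar F ℂ} (hφ : φ ^ 2 = 1) {x : F} (hx : x ≠ 0) : φ x * φ x = 1 := by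
  have h : (φ ^ 2) x = 1 := by rw [hφ]; exact MulChar.one_apply hx.isUnit
  rw [MulChar.pow_apply' _ two_ne_zero, pow_two] at h
  exact h

lemma quad_sq {φ : MulChar F ℂ} (hφ : φ ^ 2 = 1) {x : F} (hx : x ≠ 0) : φ (x ^ 2) = 1 := by
  rw [pow_two, map_mul, quad_sq_self hφ hx]

lemma quad_nonsquare {φ : MulChar F ℂ} (hφ : φ ^ 2 = 1) (hφ1 : φ ≠ 1) {x : F}
    (hx : ¬ IsSquare x) : φ x = -1 := by
  obtain ⟨y, hy⟩ : ∃ y : Fˣ, φ y ≠ 1 := by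
    by_contra! h
    exact hφ1 (MulChar.ext fun y => by rw [h y, MulChar.one_apply y.isUnit])
  have hx0 : x ≠ 0 := by rintro rfl; exact hx IsSquare.zero
  have hyn : φ y = -1 := by
    rcases mul_self_eq_one_iff.1 (quad_sq_self hφ y.ne_zero) with h | h
    · exact absurd h hy
    · exact h
  have hys : ¬ IsSquare (y : F) := by
    rintro ⟨z, hz⟩
    have hz0 : z ≠ 0 := by rintro rfl; simp at hz
    apply hy
    rw [hz, map_mul, quad_sq_self hφ hz0]
  have hsq : IsSquare (x * y) := by
    rw [← quadraticChar_one_iff_isSquare (mul_ne_zero hx0 y.ne_zero), map_mul,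
      quadraticChar_neg_one_iff_not_isSquare.2 hx, quadraticChar_neg_one_iff_not_isSquare.2 hys]
    norm_num
  obtain ⟨z, hz⟩ := hsq
  have hz0 : z ≠ 0 := by rintro rfl; simp [hx0] at hz
  have h : φ x * φ y = 1 := by rw [← map_mul, hz, map_mul, quad_sq_self hφ hz0]
  rw [hyn] at h
  linear_combination -h

/-- The number of square roots of `d` is `1 + φ(d)`. -/
lemma sum_sqrt {φ : MulChar F ℂ} (hφ : φ ^ 2 = 1) (hφ1 : φ ≠ 1) (h2 : (2 : F) ≠ 0) (d : F) :
    ∑ e : F, (if e ^ 2 = d then (1 : ℂ) else 0) = 1 + φ d := by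
  by_cases hd : IsSquare d
  · obtain ⟨r, rfl⟩ := hd
    by_cases hr : r = 0
    · subst hr
      simp [MulChar.map_zero]
    · have hne : r ≠ -r := by
        intro h
        have : 2 * r = 0 := by linear_combination h
        exact (mul_ne_zero h2 hr) this
      have : (univ.filter fun e : F => e ^ 2 = r * r) = {r, -r} := by
        ext e
        simp only [mem_filter, mem_univ, true_and, mem_insert, mem_singleton]
        rw [← pow_two, sq_eq_sq_iff_eq_or_eq_neg]
      rw [← Finset.sum_filter, this, Finset.sum_pair hne, map_mul, quad_sq_self hφ hr]
  · rw [quad_nonsquare hφ hφ1 hd, Finset.sum_eq_zero]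
    · norm_num
    · intro e _
      rw [if_neg]
      rintro rfl
      exact hd ⟨e, pow_two e⟩

lemma sum_comp_sq {φ : MulChar F ℂ} (hφ : φ ^ 2 = 1) (hφ1 : φ ≠ 1) (h2 : (2 : F) ≠ 0)
    (h : F → ℂ) : ∑ x : F, h (x ^ 2) = ∑ t : F, h t * (1 + φ t) := by
  have : ∀ t : F, h t * (1 + φ t) = ∑ e : F, if e ^ 2 = t then h t else 0 := by
    intro t
    rw [← sum_sqrt hφ hφ1 h2, mul_sum]
    simp
  simp_rw [this]
  rw [sum_comm]
  simp

/-- The map `x ↦ i(x - n/x)` takes each value `z` exactly `1 + φ(4n - z²)` times. -/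
lemma sum_joukowski {φ : MulChar F ℂ} (hφ : φ ^ 2 = 1) (hφ1 : φ ≠ 1) (h2 : (2 : F) ≠ 0)
    {i n : F} (hi : i ^ 2 = -1) (hn : n ≠ 0) (g : F → ℂ) :
    ∑ x ∈ univ.filter (fun x : F => x ≠ 0), g (i * (x - n / x)) =
      ∑ z : F, g z * (1 + φ (4 * n - z ^ 2)) := by
  have : ∀ z : F, g z * (1 + φ (4 * n - z ^ 2)) =
      ∑ e : F, if e ^ 2 = 4 * n - z ^ 2 then g z else 0 := by
    intro t
    rw [← sum_sqrt hφ hφ1 h2, mul_sum]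
    simp
  simp_rw [this]
  rw [← Finset.sum_product', ← Finset.sum_filter]
  have h4 : (4 : F) ≠ 0 := by
    have : (4 : F) = 2 * 2 := by norm_num
    rw [this]; exact mul_ne_zero h2 h2
  have key : ∀ p : F × F, p.2 ^ 2 = 4 * n - p.1 ^ 2 → p.2 - i * p.1 ≠ 0 := by
    intro p hp h
    apply mul_ne_zero h4 hn
    linear_combination (-1 : F) * hp + (p.2 + i * p.1) * h + p.1 ^ 2 * hi
  refine Finset.sum_nbij' (fun x => (i * (x - n / x), x + n / x))
    (fun p => (p.2 - i * p.1) / 2) ?_ ?_ ?_ ?_ ?_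
  · intro x hx
    simp only [mem_filter, mem_univ, true_and, mem_product, and_self] at hx ⊢
    field_simp
    linear_combination (x ^ 2 - n) ^ 2 * hi
  · intro p hp
    simp only [mem_filter, mem_univ, true_and, mem_product, and_self] at hp ⊢
    exact div_ne_zero (key p hp) h2
  · intro x hx
    simp only [mem_filter, mem_univ, true_and] at hx
    simp only
    field_simp
    linear_combination (n - x ^ 2) * hi
  · intro p hp
    simp only [mem_filter, mem_univ, true_and, mem_product, and_self] at hp
    have h0 := key p hp
    have hn' : n / ((p.2 - i * p.1) / 2) = (p.2 + i * p.1) / 2 := by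
      field_simp
      linear_combination (-1 : F) * hp + p.1 ^ 2 * hi
    ext
    · simp only [hn']
      field_simp
      linear_combination (-2 * p.1) * hi
    · simp only [hn']
      field_simp
      ring
  · intro x _
    rfl

/-! ### Gauss and Kloosterman sums -/

lemma sum_mulChar_shift (χ : MulChar F ℂ) (ψ : AddChar F ℂ) {z : F} (hz : z ≠ 0) :
    ∑ y : F, χ y * ψ (z * y) = χ⁻¹ z * gaussSum χ ψ := by
  have h := gaussSum_mulShift χ ψ (Units.mk0 z hz)
  rw [← h, ← mul_assoc, Units.val_mk0, ← MulChar.mul_apply, inv_mul_cancel,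
    MulChar.one_apply hz.isUnit, one_mul]
  simp [gaussSum, AddChar.mulShift_apply]

lemma sum_quad_shift {φ : MulChar F ℂ} (hφ : φ ^ 2 = 1) (hφ1 : φ ≠ 1) (ψ : AddChar F ℂ) (z : F) :
    ∑ y : F, φ y * ψ (z * y) = φ z * gaussSum φ ψ := by
  by_cases hz : z = 0
  · subst hz
    simp [MulChar.sum_eq_zero_of_ne_one hφ1, MulChar.map_zero]
  · rw [sum_mulChar_shift φ ψ hz]
    have : φ⁻¹ = φ := by
      rw [inv_eq_iff_mul_eq_one, ← pow_two, hφ]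
    rw [this]

lemma sum_filter_psi {ψ : AddChar F ℂ} (hψ : ψ ≠ 1) :
    ∑ c ∈ univ.filter (fun c : F => c ≠ 0), ψ c = -1 := by
  have h := AddChar.sum_eq_zero_of_ne_one hψ
  rw [← Finset.add_sum_erase univ _ (mem_univ (0 : F)), AddChar.map_zero_eq_one] at h
  have : univ.filter (fun c : F => c ≠ 0) = univ.erase 0 := by ext; simp
  rw [this]
  linear_combination h

/-- A Kloosterman sum depends only on the product of its parameters, except that the totally
degenerate sum exceeds `kloos ψ 1 0 = -1` by `q`. -/
lemma kloos_eq {ψ : AddChar F ℂ} (hψ : ψ ≠ 1) (α β : F) :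
    kloos ψ α β = kloos ψ 1 (α * β) +
      (Fintype.card F : ℂ) * (if α = 0 ∧ β = 0 then 1 else 0) := by
  unfold kloos
  by_cases hα : α = 0
  · subst hα
    simp only [zero_mul, zero_add, one_mul, zero_div, add_zero, true_and]
    rw [sum_filter_psi hψ]
    by_cases hβ : β = 0
    · subst hβ
      simp only [zero_div, AddChar.map_zero_eq_one, sum_const, nsmul_eq_mul, mul_one, if_true]
      have : univ.filter (fun c : F => c ≠ 0) = univ.erase 0 := by ext; simp
      rw [this, card_erase_of_mem (mem_univ _), card_univ, Nat.cast_sub Fintype.card_pos]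
      push_cast
      ring
    · rw [if_neg hβ, mul_zero, add_zero, ← sum_filter_psi hψ]
      refine Finset.sum_nbij' (fun c => β / c) (fun c => β / c) ?_ ?_ ?_ ?_ ?_
      · intro c hc; simp_all
      · intro c hc; simp_all
      · intro c hc; simp at hc; field_simp
      · intro c hc; simp at hc; field_simp
      · intro c hc; rfl
  · rw [if_neg (by simp [hα]), mul_zero, add_zero]
    refine Finset.sum_nbij' (fun c => α * c) (fun c => c / α) ?_ ?_ ?_ ?_ ?_
    · intro c hc; simp_all
    · intro c hc; simp_all
    · intro c hc; field_simp
    · intro c hc; field_simp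
    · intro c hc
      simp at hc
      congr 1
      field_simp

/-! ### The Katz identity -/

lemma quartic_pow {A₄ : MulChar F ℂ} (hA : A₄ ^ 4 = 1) {x : F} (hx : x ≠ 0) : A₄ x ^ 4 = 1 := by
  rw [← MulChar.pow_apply' _ four_ne_zero, hA, MulChar.one_apply hx.isUnit]

lemma quartic_inv {A₄ : MulChar F ℂ} (hA : A₄ ^ 4 = 1) {x : F} (hx : x ≠ 0) :
    A₄ x⁻¹ = A₄ x ^ 3 := by
  have h : A₄ x * A₄ x⁻¹ = 1 := by rw [← map_mul, mul_inv_cancel₀ hx, map_one]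
  linear_combination (-A₄ x⁻¹) * quartic_pow hA hx + A₄ x ^ 3 * h

/-- The product of two Katz sums as a sum of Kloosterman sums. The involution
`(X, Y) ↦ (a j⁴/X, a k⁴/Y)` cancels the pairs with `XY/a` a nonsquare; the remaining pairs are
doubly covered by `(X, Y) = (a x/c, c x)`. -/
lemma katzSum_mul {A₄ : MulChar F ℂ} (hA : A₄ ^ 4 = 1) (hA2 : A₄ ^ 2 ≠ 1) (h2 : (2 : F) ≠ 0)
    (ψ : AddChar F ℂ) {a j k : F} (ha : a ≠ 0) (hj : j ≠ 0) (hk : k ≠ 0) :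
    2 * (katzSum ψ A₄ a (j ^ 4) * katzSum ψ A₄ a (k ^ 4)) =
      A₄ a * ∑ x ∈ univ.filter (fun x : F => x ≠ 0),
        (A₄ ^ 2) x * kloos ψ (x + j ^ 4 / x) (a * (x + k ^ 4 / x)) := by
  have hφ : (A₄ ^ 2) ^ 2 = 1 := by rw [← pow_mul]; exact hA
  set N := univ.filter (fun x : F => x ≠ 0) with hN
  let E : F × F → ℂ := fun p => ψ (p.1 + a * j ^ 4 / p.1) * ψ (p.2 + a * k ^ 4 / p.2)
  have hW : katzSum ψ A₄ a (j ^ 4) * katzSum ψ A₄ a (k ^ 4) =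
      ∑ p ∈ N ×ˢ N, A₄ p.1 * A₄ p.2 * E p := by
    unfold katzSum
    rw [sum_mul_sum, ← sum_product']
    refine sum_congr rfl fun p _ => ?_
    simp only [E]
    ring
  have hinv : ∑ p ∈ N ×ˢ N, A₄ p.1 * A₄ p.2 * E p =
      ∑ p ∈ N ×ˢ N, A₄ p.1 * A₄ p.2 * E p * (A₄ ^ 2) (p.1 * p.2 / a) := by
    symm
    refine sum_nbij' (fun p => (a * j ^ 4 / p.1, a * k ^ 4 / p.2))
      (fun p => (a * j ^ 4 / p.1, a * k ^ 4 / p.2)) ?_ ?_ ?_ ?_ ?_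
    · intro p hp
      simp [hN] at hp ⊢
      simp [hp, ha, hj, hk]
    · intro p hp
      simp [hN] at hp ⊢
      simp [hp, ha, hj, hk]
    · intro p hp
      simp [hN] at hp
      obtain ⟨h1, h2⟩ := hp
      ext
      · simp only; field_simp
      · simp only; field_simp
    · intro p hp
      simp [hN] at hp
      obtain ⟨h1, h2⟩ := hp
      ext
      · simp only; field_simp
      · simp only; field_simp
    · intro p hp
      simp [hN] at hp
      obtain ⟨h1, h2⟩ := hp
      have e1 : a * j ^ 4 / p.1 + a * j ^ 4 / (a * j ^ 4 / p.1) = p.1 + a * j ^ 4 / p.1 := by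
        field_simp
        ring
      have e2 : a * k ^ 4 / p.2 + a * k ^ 4 / (a * k ^ 4 / p.2) = p.2 + a * k ^ 4 / p.2 := by
        field_simp
        ring
      simp only [E, e1, e2]
      rw [MulChar.pow_apply' _ two_ne_zero]
      simp only [div_eq_mul_inv, map_mul, map_pow, quartic_inv hA h1, quartic_inv hA h2,
        quartic_inv hA ha, quartic_pow hA hj, quartic_pow hA hk]
      linear_combination (A₄ p.1 * A₄ p.2) ^ 3 * (A₄ a) ^ 2 *
        ψ (p.1 + a * j ^ 4 * p.1⁻¹) * ψ (p.2 + a * k ^ 4 * p.2⁻¹) * quartic_pow hA ha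
  have hdouble : 2 * (katzSum ψ A₄ a (j ^ 4) * katzSum ψ A₄ a (k ^ 4)) =
      ∑ p ∈ N ×ˢ N, ∑ e : F,
        if e ^ 2 = p.1 * p.2 / a then A₄ p.1 * A₄ p.2 * E p else 0 := by
    rw [two_mul]
    nth_rewrite 2 [hW]
    rw [hinv, hW, ← sum_add_distrib]
    refine sum_congr rfl fun p _ => ?_
    have := sum_sqrt hφ hA2 h2 (p.1 * p.2 / a)
    calc _ = A₄ p.1 * A₄ p.2 * E p * (1 + (A₄ ^ 2) (p.1 * p.2 / a)) := by ring
      _ = _ := by rw [← this, mul_sum]; simp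
  rw [hdouble, ← sum_product', ← sum_filter]
  unfold kloos
  rw [mul_sum]
  simp_rw [mul_sum]
  rw [← hN, ← sum_product']
  refine sum_nbij' (fun t => (t.2, t.1.2 / t.2)) (fun p => ((a * p.1 / p.2, p.2 * p.1), p.1))
    ?_ ?_ ?_ ?_ ?_
  · rintro ⟨⟨X, Y⟩, e⟩ ht
    simp [hN] at ht ⊢
    obtain ⟨⟨hX, hY⟩, he⟩ := ht
    have : e ≠ 0 := by
      rintro rfl
      rw [zero_pow two_ne_zero] at he
      exact (div_ne_zero (mul_ne_zero hX hY) ha) he.symm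
    exact ⟨this, hY, this⟩
  · rintro ⟨x, c⟩ hp
    simp [hN] at hp ⊢
    obtain ⟨hx, hc⟩ := hp
    refine ⟨⟨⟨⟨ha, hx⟩, hc⟩, hc, hx⟩, ?_⟩
    field_simp
  · rintro ⟨⟨X, Y⟩, e⟩ ht
    simp [hN] at ht
    obtain ⟨⟨hX, hY⟩, he⟩ := ht
    have h0 : e ≠ 0 := by
      rintro rfl
      rw [zero_pow two_ne_zero] at he
      exact (div_ne_zero (mul_ne_zero hX hY) ha) he.symm
    have : a * e / (Y / e) = X := by
      field_simp
      field_simp at he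
      linear_combination he
    simp only [this, div_mul_cancel₀ _ h0]
  · rintro ⟨x, c⟩ hp
    simp [hN] at hp
    obtain ⟨hx, hc⟩ := hp
    simp only [mul_div_cancel_right₀ _ hx]
  · rintro ⟨⟨X, Y⟩, e⟩ ht
    simp [hN] at ht
    obtain ⟨⟨hX, hY⟩, he⟩ := ht
    have h0 : e ≠ 0 := by
      rintro rfl
      rw [zero_pow two_ne_zero] at he
      exact (div_ne_zero (mul_ne_zero hX hY) ha) he.symm
    have hXe : X = a * e ^ 2 / Y := by
      field_simp
      field_simp at he
      linear_combination -he
    have hc : A₄ X * A₄ Y = A₄ a * (A₄ ^ 2) e := by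
      rw [← map_mul, hXe, div_mul_cancel₀ _ hY, map_mul, map_pow, MulChar.pow_apply' _ two_ne_zero]
    simp only [E]
    rw [hc, ← AddChar.map_add_eq_mul, mul_assoc, hXe]
    congr 3
    field_simp
    ring

/-- The mixed character sum in `P(j,k)` as a sum of Kloosterman sums. -/
lemma mixed_eq {φ : MulChar F ℂ} (hφ : φ ^ 2 = 1) (hφ1 : φ ≠ 1) (ψ : AddChar F ℂ) (a j k : F) :
    gaussSum φ ψ * ∑ x ∈ univ.filter (fun x : F => x ≠ 0),
        φ (a / x - x) * ψ (x * (j + k) ^ 2 + (a / x) * (j - k) ^ 2) =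
      ∑ y : F, φ y * kloos ψ ((j + k) ^ 2 - y) (a * ((j - k) ^ 2 + y)) := by
  unfold kloos
  simp_rw [mul_sum]
  rw [sum_comm]
  refine sum_congr rfl fun x _ => ?_
  rw [← mul_assoc, mul_comm (gaussSum φ ψ), ← sum_quad_shift hφ hφ1, sum_mul]
  refine sum_congr rfl fun y _ => ?_
  rw [mul_assoc, ← AddChar.map_add_eq_mul]
  congr 2
  ring

/-- The substitution `y = i(x - j²k²/x) + 2jk = (i/x)(x - ijk)²`, under which `φ(y) = φ(i)φ(x)`
unless `y = 0`,
matches the nondegenerate parts of the two sums of Kloosterman sums. -/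
lemma core_eq {φ : MulChar F ℂ} (hφ : φ ^ 2 = 1) (hφ1 : φ ≠ 1) (h2 : (2 : F) ≠ 0)
    {i : F} (hi : i ^ 2 = -1) (ψ : AddChar F ℂ) {a j k : F} (hj : j ≠ 0) (hk : k ≠ 0) :
    ∑ x ∈ univ.filter (fun x : F => x ≠ 0),
        φ x * kloos ψ 1 ((x + j ^ 4 / x) * (a * (x + k ^ 4 / x))) =
      2 * φ i * ∑ y : F, φ y * kloos ψ 1 (((j + k) ^ 2 - y) * (a * ((j - k) ^ 2 + y))) := by
  have hi0 : i ≠ 0 := by rintro rfl; simp at hi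
  have hii := quad_sq_self hφ hi0
  have hjk : j * k ≠ 0 := mul_ne_zero hj hk
  let κ : F → ℂ := fun z => kloos ψ 1 (a * ((j ^ 2 + k ^ 2) ^ 2 - z ^ 2))
  let g : F → ℂ := fun z =>
    (φ (z + 2 * (j * k)) + if z + 2 * (j * k) = 0 then φ (j * k) else 0) * κ z
  have h1 : ∀ x ∈ univ.filter (fun x : F => x ≠ 0),
      φ x * kloos ψ 1 ((x + j ^ 4 / x) * (a * (x + k ^ 4 / x))) =
        φ i * g (i * (x - (j * k) ^ 2 / x)) := by
    intro x hx
    simp only [mem_filter, mem_univ, true_and] at hx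
    have hκ : kloos ψ 1 ((x + j ^ 4 / x) * (a * (x + k ^ 4 / x))) =
        κ (i * (x - (j * k) ^ 2 / x)) := by
      simp only [κ]
      congr 1
      field_simp
      linear_combination a * (x ^ 2 - j ^ 2 * k ^ 2) ^ 2 * hi
    have hy : i * (x - (j * k) ^ 2 / x) + 2 * (j * k) = i * x * ((x - i * (j * k)) / x) ^ 2 := by
      field_simp
      linear_combination (2 * x * j * k - i * j ^ 2 * k ^ 2) * hi
    simp only [g, hκ, hy]
    rw [← mul_assoc]
    congr 1
    by_cases h : x - i * (j * k) = 0
    · have hx' : x = i * (j * k) := by linear_combination h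
      rw [h]
      simp only [zero_div, zero_pow two_ne_zero, mul_zero, MulChar.map_zero, if_true, zero_add]
      rw [hx', map_mul]
    · have h3 : (x - i * (j * k)) / x ≠ 0 := div_ne_zero h hx
      rw [if_neg (mul_ne_zero (mul_ne_zero hi0 hx) (pow_ne_zero 2 h3)), map_mul, map_mul,
        quad_sq hφ h3]
      linear_combination (-φ x) * hii
  rw [sum_congr rfl h1, ← mul_sum, sum_joukowski hφ hφ1 h2 hi (pow_ne_zero 2 hjk)]
  have h4 : ∀ z : F, g z * (1 + φ (4 * (j * k) ^ 2 - z ^ 2)) =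
      φ (z + 2 * (j * k)) * κ z + φ (-z + 2 * (j * k)) * κ z := by
    intro z
    have hf : 4 * (j * k) ^ 2 - z ^ 2 = (z + 2 * (j * k)) * (-z + 2 * (j * k)) := by ring
    simp only [g, hf, map_mul φ (z + 2 * (j * k))]
    by_cases h : z + 2 * (j * k) = 0
    · have hz : -z + 2 * (j * k) = (j * k) * 2 ^ 2 := by linear_combination -h
      rw [h, hz, if_pos rfl, MulChar.map_zero, map_mul φ (j * k), quad_sq hφ h2]
      ring
    · rw [if_neg h]
      linear_combination φ (-z + 2 * (j * k)) * κ z * quad_sq_self hφ h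
  rw [sum_congr rfl fun z _ => h4 z, sum_add_distrib]
  have h5 : ∑ z : F, φ (-z + 2 * (j * k)) * κ z = ∑ z : F, φ (z + 2 * (j * k)) * κ z := by
    refine Fintype.sum_equiv (Equiv.neg F) _ _ fun z => ?_
    simp [κ]
  have h6 : ∑ y : F, φ y * kloos ψ 1 (((j + k) ^ 2 - y) * (a * ((j - k) ^ 2 + y))) =
      ∑ z : F, φ (z + 2 * (j * k)) * κ z := by
    refine Fintype.sum_equiv (Equiv.subRight (2 * (j * k))) _ _ fun y => ?_
    simp only [Equiv.subRight_apply, sub_add_cancel, κ]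
    congr 2
    ring
  rw [h5, h6]
  ring

/-- The contribution of the degenerate sums `Kl(0,0)` to `K(j) K(k)`: they occur at `x = ±ij²`,
and only when `j⁴ = k⁴`. -/
lemma degenerate_left {φ : MulChar F ℂ} (hφ : φ ^ 2 = 1) (h2 : (2 : F) ≠ 0)
    {i : F} (hi : i ^ 2 = -1) {a j k : F} (ha : a ≠ 0) (hj : j ≠ 0) :
    ∑ x ∈ univ.filter (fun x : F => x ≠ 0),
        φ x * (if x + j ^ 4 / x = 0 ∧ a * (x + k ^ 4 / x) = 0 then (1 : ℂ) else 0) =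
      2 * φ i * (if j ^ 4 = k ^ 4 then 1 else 0) := by
  have hi0 : i ≠ 0 := by rintro rfl; simp at hi
  have hc : ∀ x ∈ univ.filter (fun x : F => x ≠ 0),
      φ x * (if x + j ^ 4 / x = 0 ∧ a * (x + k ^ 4 / x) = 0 then (1 : ℂ) else 0) =
      if x = i * j ^ 2 ∨ x = -(i * j ^ 2) then φ x * (if j ^ 4 = k ^ 4 then 1 else 0) else 0 := by
    intro x hx
    simp only [mem_filter, mem_univ, true_and] at hx
    have e1 : x + j ^ 4 / x = 0 ↔ (x = i * j ^ 2 ∨ x = -(i * j ^ 2)) := by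
      rw [← sq_eq_sq_iff_eq_or_eq_neg]
      field_simp
      constructor
      · intro h; linear_combination h - j ^ 4 * hi
      · intro h; linear_combination h + j ^ 4 * hi
    by_cases h : x + j ^ 4 / x = 0
    · rw [if_pos (e1.1 h)]
      have e2 : (x + j ^ 4 / x = 0 ∧ a * (x + k ^ 4 / x) = 0) ↔ j ^ 4 = k ^ 4 := by
        simp only [h, true_and, mul_eq_zero, ha, false_or]
        field_simp at h ⊢
        constructor
        · intro h'; linear_combination h - h'
        · intro h'; linear_combination h - h'
      simp only [e2]
    · rw [if_neg (fun h' => h (e1.2 h')), if_neg (fun h' => h h'.1), mul_zero]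
  rw [sum_congr rfl hc, ← sum_filter, filter_filter]
  have hij : i * j ^ 2 ≠ 0 := mul_ne_zero hi0 (pow_ne_zero 2 hj)
  have hne : i * j ^ 2 ≠ -(i * j ^ 2) := by
    intro h
    exact mul_ne_zero h2 hij (by linear_combination h)
  have hs : (univ.filter fun x : F => x ≠ 0 ∧ (x = i * j ^ 2 ∨ x = -(i * j ^ 2))) =
      {i * j ^ 2, -(i * j ^ 2)} := by
    ext x
    simp only [mem_filter, mem_univ, true_and, mem_insert, mem_singleton, and_iff_right_iff_imp]
    rintro (rfl | rfl)
    · exact hij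
    · exact neg_ne_zero.2 hij
  have hm : -(i * j ^ 2) = i * (i * j) ^ 2 := by linear_combination (-i * j ^ 2) * hi
  rw [hs, sum_pair hne, hm, map_mul, map_mul, quad_sq hφ hj, quad_sq hφ (mul_ne_zero hi0 hj)]
  ring

/-- The contribution of the degenerate sums `Kl(0,0)` to the mixed sum: they occur at `y = (j+k)²`,
and only when `j² + k² = 0`. -/
lemma degenerate_right {φ : MulChar F ℂ} (hφ : φ ^ 2 = 1) (h2 : (2 : F) ≠ 0)
    {a j k : F} (ha : a ≠ 0) (hj : j ≠ 0) :
    ∑ y : F, φ y * (if (j + k) ^ 2 - y = 0 ∧ a * ((j - k) ^ 2 + y) = 0 then (1 : ℂ) else 0) =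
      if j ^ 2 + k ^ 2 = 0 then 1 else 0 := by
  rw [Finset.sum_eq_single ((j + k) ^ 2)]
  · have e : ((j + k) ^ 2 - (j + k) ^ 2 = 0 ∧ a * ((j - k) ^ 2 + (j + k) ^ 2) = 0) ↔
        j ^ 2 + k ^ 2 = 0 := by
      have : (j - k) ^ 2 + (j + k) ^ 2 = 2 * (j ^ 2 + k ^ 2) := by ring
      simp [this, ha, h2]
    simp only [e]
    by_cases h : j ^ 2 + k ^ 2 = 0
    · have hjk : j + k ≠ 0 := by
        intro h'
        refine mul_ne_zero h2 (pow_ne_zero 2 hj) ?_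
        linear_combination h + (j - k) * h'
      rw [if_pos h, quad_sq hφ hjk, mul_one]
    · rw [if_neg h, mul_zero]
  · intro y _ hy
    rw [if_neg, mul_zero]
    rintro ⟨h, -⟩
    exact hy (by linear_combination -h)
  · intro h
    exact absurd (mem_univ _) h

/-- The discrepancy between the two degenerate contributions is exactly the delta part of
`P(j,k)`. -/
lemma delta_split (h2 : (2 : F) ≠ 0) {j k : F} (hj : j ≠ 0) :
    (if j ^ 4 = k ^ 4 then (1 : ℂ) else 0) =
      (if j = k then 1 else 0) + (if j = -k then 1 else 0) +
        (if j ^ 2 + k ^ 2 = 0 then 1 else 0) := by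
  have h0 : 2 * j ^ 2 ≠ 0 := mul_ne_zero h2 (pow_ne_zero 2 hj)
  by_cases h1 : j = k
  · subst h1
    have e1 : j ≠ -j := fun h => mul_ne_zero h2 hj (by linear_combination h)
    have e2 : j ^ 2 + j ^ 2 ≠ 0 := by rwa [← two_mul]
    simp [e1, e2]
  · by_cases h3 : j = -k
    · have e2 : j ^ 2 + k ^ 2 ≠ 0 := by
        intro h
        exact h0 (by linear_combination h + (j - k) * h3)
      have e4 : j ^ 4 = k ^ 4 := by rw [h3]; ring
      rw [if_pos e4, if_neg h1, if_pos h3, if_neg e2]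
      ring
    · have e : j ^ 4 = k ^ 4 ↔ j ^ 2 + k ^ 2 = 0 := by
        have hp : (j - k) * (j + k) ≠ 0 :=
          mul_ne_zero (sub_ne_zero.2 h1) (fun h => h3 (by linear_combination h))
        constructor
        · intro h
          refine (mul_eq_zero.1 (?_ : ((j - k) * (j + k)) * (j ^ 2 + k ^ 2) = 0)).resolve_left hp
          linear_combination h
        · intro h
          linear_combination (j ^ 2 - k ^ 2) * h
      simp [e, h1, h3]

/-- Katz's identity: `q A₄(-a) P(j,k)` is the product of the Katz sums at `j` and at `k`. -/
lemma katz_identity {A₄ : MulChar F ℂ} (hA : A₄ ^ 4 = 1) (hA2 : A₄ ^ 2 ≠ 1) (h2 : (2 : F) ≠ 0)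
    {i : F} (hi : i ^ 2 = -1) {ψ : AddChar F ℂ} (hψ : ψ ≠ 1)
    {a j k : F} (ha : a ≠ 0) (hj : j ≠ 0) (hk : k ≠ 0) :
    (Fintype.card F : ℂ) * A₄ (-a) * Pkatz ψ A₄ a j k =
      katzSum ψ A₄ a (j ^ 4) * katzSum ψ A₄ a (k ^ 4) := by
  have hφ : (A₄ ^ 2) ^ 2 = 1 := by rw [← pow_mul]; exact hA
  have hi0 : i ≠ 0 := by rintro rfl; simp at hi
  have hm1 : (A₄ ^ 2) (-1) = 1 := by rw [← hi, quad_sq hφ hi0]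
  have hG : gaussSum (A₄ ^ 2) ψ ^ 2 = (Fintype.card F : ℂ) := by
    rw [gaussSum_sq hA2 (MulChar.isQuadratic_iff_sq_eq_one.2 hφ)
      (AddChar.IsPrimitive.of_ne_one hψ), hm1, one_mul]
  have hG0 : gaussSum (A₄ ^ 2) ψ ≠ 0 := by
    intro h
    rw [h, zero_pow two_ne_zero] at hG
    exact Nat.cast_ne_zero.2 Fintype.card_ne_zero hG.symm
  have hAa : A₄ (-a) = (A₄ ^ 2) i * A₄ a := by
    rw [MulChar.pow_apply' _ two_ne_zero, ← map_pow, hi, ← map_mul, neg_one_mul]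
  have hL := katzSum_mul hA hA2 h2 ψ ha hj hk
  have hR := mixed_eq hφ hA2 ψ a j k
  have hC := core_eq hφ hA2 h2 hi ψ (a := a) hj hk
  have hdl := degenerate_left hφ h2 hi ha hj (k := k)
  have hdr := degenerate_right hφ h2 ha hj (k := k)
  have hd := delta_split h2 hj (k := k)
  have hL' : ∑ x ∈ univ.filter (fun x : F => x ≠ 0),
        (A₄ ^ 2) x * kloos ψ (x + j ^ 4 / x) (a * (x + k ^ 4 / x)) =
      ∑ x ∈ univ.filter (fun x : F => x ≠ 0),
        (A₄ ^ 2) x * kloos ψ 1 ((x + j ^ 4 / x) * (a * (x + k ^ 4 / x))) +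
      (Fintype.card F : ℂ) * (2 * (A₄ ^ 2) i * (if j ^ 4 = k ^ 4 then 1 else 0)) := by
    rw [← hdl, mul_sum, ← sum_add_distrib]
    refine sum_congr rfl fun x _ => ?_
    rw [kloos_eq hψ]
    ring
  have hR' : ∑ y : F, (A₄ ^ 2) y * kloos ψ ((j + k) ^ 2 - y) (a * ((j - k) ^ 2 + y)) =
      ∑ y : F, (A₄ ^ 2) y * kloos ψ 1 (((j + k) ^ 2 - y) * (a * ((j - k) ^ 2 + y))) +
      (Fintype.card F : ℂ) * (if j ^ 2 + k ^ 2 = 0 then 1 else 0) := by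
    rw [← hdr, mul_sum, ← sum_add_distrib]
    refine sum_congr rfl fun y _ => ?_
    rw [kloos_eq hψ]
    ring
  rw [hL', hC, hd] at hL
  rw [hR'] at hR
  unfold Pkatz
  rw [hm1, hAa]
  set M := ∑ x ∈ univ.filter (fun x : F => x ≠ 0),
    (A₄ ^ 2) (a / x - x) * ψ (x * (j + k) ^ 2 + (a / x) * (j - k) ^ 2)
  have hq : (Fintype.card F : ℂ) * ((gaussSum (A₄ ^ 2) ψ)⁻¹ * M) = gaussSum (A₄ ^ 2) ψ * M := by
    rw [← hG]
    field_simp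
  linear_combination (A₄ ^ 2) i * A₄ a * hq + (A₄ ^ 2) i * A₄ a * hR - (1 / 2 : ℂ) * hL

/-! ### The Mellin transform -/

/-- The Mellin transform of the Katz sums at a fourth power. -/
lemma mellin_katzSum {A₄ : MulChar F ℂ} (hA : A₄ ^ 4 = 1) (hA2 : A₄ ^ 2 ≠ 1) (h2 : (2 : F) ≠ 0)
    (ψ : AddChar F ℂ) {a : F} (ha : a ≠ 0) (ν : MulChar F ℂ) :
    ∑ j ∈ univ.filter (fun j : F => j ≠ 0), (ν ^ 4) j * katzSum ψ A₄ a (j ^ 4) =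
      ∑ n ∈ Finset.range 4, (ν * A₄ ^ n)⁻¹ a *
        gaussSum (ν * A₄ ^ n) ψ * gaussSum (ν * A₄ ^ (n + 1)) ψ := by
  have hφ : (A₄ ^ 2) ^ 2 = 1 := by rw [← pow_mul]; exact hA
  have hχ : ∀ χ : MulChar F ℂ, ∑ t : F, χ t * katzSum ψ A₄ a t =
      χ⁻¹ a * gaussSum χ ψ * gaussSum (χ * A₄) ψ := by
    intro χ
    unfold katzSum
    simp_rw [mul_sum]
    rw [sum_comm]
    have hx : ∀ x ∈ univ.filter (fun x : F => x ≠ 0),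
        ∑ t : F, χ t * (A₄ x * ψ (x + a * t / x)) =
          χ⁻¹ a * gaussSum χ ψ * ((χ * A₄) x * ψ x) := by
      intro x hx
      simp only [mem_filter, mem_univ, true_and] at hx
      have h := sum_mulChar_shift χ ψ (div_ne_zero ha hx)
      have e : χ⁻¹ (a / x) = χ⁻¹ a * χ x := by
        rw [div_eq_mul_inv, map_mul, MulChar.inv_apply' χ x⁻¹, inv_inv]
      rw [e] at h
      calc _ = A₄ x * ψ x * ∑ t : F, χ t * ψ (a / x * t) := by
            rw [mul_sum]
            refine sum_congr rfl fun t _ => ?_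
            rw [AddChar.map_add_eq_mul, div_mul_eq_mul_div]
            ring
        _ = _ := by rw [h, MulChar.mul_apply]; ring
    rw [sum_congr rfl hx, ← mul_sum, gaussSum, sum_filter]
    congr 1
    refine sum_congr rfl fun x _ => ?_
    split_ifs with h
    · rfl
    · rw [not_not.1 h, MulChar.map_zero, zero_mul]
  -- Fourth powers are reached by applying the square-substitution formula twice.
  have h4 : ∑ j ∈ univ.filter (fun j : F => j ≠ 0), (ν ^ 4) j * katzSum ψ A₄ a (j ^ 4) =
      ∑ t : F, (ν t + (ν * A₄) t) * katzSum ψ A₄ a t * (1 + (A₄ ^ 2) t) := by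
    rw [← sum_comp_sq hφ hA2 h2 fun t => (ν t + (ν * A₄) t) * katzSum ψ A₄ a t]
    have e1 : ∀ s : F, (ν (s ^ 2) + (ν * A₄) (s ^ 2)) * katzSum ψ A₄ a (s ^ 2) =
        (ν ^ 2) s * katzSum ψ A₄ a (s ^ 2) * (1 + (A₄ ^ 2) s) := by
      intro s
      rw [MulChar.mul_apply, MulChar.pow_apply' _ two_ne_zero, MulChar.pow_apply' _ two_ne_zero,
        map_pow, map_pow]
      ring
    rw [sum_congr rfl fun s _ => e1 s,
      ← sum_comp_sq hφ hA2 h2 fun s => (ν ^ 2) s * katzSum ψ A₄ a (s ^ 2), sum_filter]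
    refine sum_congr rfl fun j _ => ?_
    have e2 : (ν ^ 2) (j ^ 2) = (ν ^ 4) j := by
      rw [MulChar.pow_apply' _ two_ne_zero, MulChar.pow_apply' _ four_ne_zero, map_pow, ← pow_mul]
    rw [e2, ← pow_mul]
    split_ifs with h
    · rfl
    · rw [not_not.1 h, MulChar.map_zero, zero_mul]
  have h5 : ∀ n, (ν * A₄ ^ n)⁻¹ a * gaussSum (ν * A₄ ^ n) ψ * gaussSum (ν * A₄ ^ (n + 1)) ψ =
      ∑ t : F, (ν * A₄ ^ n) t * katzSum ψ A₄ a t := by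
    intro n
    rw [hχ, pow_succ, ← mul_assoc ν]
  rw [h4, sum_congr rfl fun n _ => h5 n, sum_comm]
  refine sum_congr rfl fun t _ => ?_
  by_cases ht : t = 0
  · subst ht
    simp [MulChar.map_zero]
  · simp only [sum_range_succ, range_zero, sum_empty, zero_add, pow_zero, pow_one,
      MulChar.one_apply (Ne.isUnit ht), MulChar.mul_apply, MulChar.pow_apply' _ two_ne_zero, MulChar.pow_apply' _ three_ne_zero]
    ring

end Helpers

/-- Evaluation of `T(ν₁⁴, ν₂⁴)` in terms of Gauss sums. -/
theorem T2_eval_fourth_powers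
    (F : Type) [Field F] [Fintype F] [DecidableEq F]
    (hq : Fintype.card F % 4 = 1)
    (ψ : AddChar F ℂ) (hψ : ψ ≠ 1)
    (A₄ : MulChar F ℂ) (hA₄ : orderOf A₄ = 4)
    (a : F) (ha : a ≠ 0)
    (ν₁ ν₂ : MulChar F ℂ) :
    Tmel2 ψ A₄ a (ν₁ ^ 4) (ν₂ ^ 4) =
      A₄ (-a) / (Fintype.card F : ℂ) *
        ∑ m ∈ Finset.range 4, ∑ n ∈ Finset.range 4,
          ((ν₁ * ν₂)⁻¹ * (A₄⁻¹) ^ (m + n)) a *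
            gaussSum (ν₁ * A₄ ^ ((n : ℤ) - 1)) ψ * gaussSum (ν₁ * A₄ ^ (n : ℤ)) ψ *
            gaussSum (ν₂ * A₄ ^ ((m : ℤ) - 1)) ψ * gaussSum (ν₂ * A₄ ^ (m : ℤ)) ψ := by
  have hA : A₄ ^ 4 = 1 := by rw [← hA₄, pow_orderOf_eq_one]
  have hA2 : A₄ ^ 2 ≠ 1 := pow_ne_one_of_lt_orderOf two_ne_zero (by rw [hA₄]; norm_num)
  have h2 : (2 : F) ≠ 0 := by
    refine Ring.two_ne_zero fun h => ?_
    have := FiniteField.even_card_of_char_two h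
    omega
  obtain ⟨i, hi'⟩ := FiniteField.isSquare_neg_one_iff.2 (show Fintype.card F % 4 ≠ 3 by omega)
  have hi : i ^ 2 = -1 := by rw [pow_two, hi']
  have hq0 : (Fintype.card F : ℂ) ≠ 0 := Nat.cast_ne_zero.2 Fintype.card_ne_zero
  have hm1 : A₄ (-1) * A₄ (-1) = 1 := by rw [← map_mul]; simp
  have hAa := quartic_pow hA ha
  have hneg : A₄ (-a) = A₄ (-1) * A₄ a := by rw [← map_mul, neg_one_mul]
  -- `q A₄(-a) T` is the product of the two Mellin transforms of the Katz sums.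
  have hT : (Fintype.card F : ℂ) * A₄ (-a) * Tmel2 ψ A₄ a (ν₁ ^ 4) (ν₂ ^ 4) =
      (∑ j ∈ univ.filter (fun j : F => j ≠ 0), (ν₁ ^ 4) j * katzSum ψ A₄ a (j ^ 4)) *
      (∑ k ∈ univ.filter (fun k : F => k ≠ 0), (ν₂ ^ 4) k * katzSum ψ A₄ a (k ^ 4)) := by
    unfold Tmel2
    rw [sum_mul_sum, mul_sum]
    refine sum_congr rfl fun j hj => ?_
    rw [mul_sum]
    refine sum_congr rfl fun k hk => ?_
    have h := katz_identity hA hA2 h2 hi hψ ha (mem_filter.1 hj).2 (mem_filter.1 hk).2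
    linear_combination (ν₁ ^ 4) j * (ν₂ ^ 4) k * h
  rw [mellin_katzSum hA hA2 h2 ψ ha, mellin_katzSum hA hA2 h2 ψ ha] at hT
  -- Shifting the summation index by one costs a factor `A₄⁻¹(a)` in each variable.
  have hshift : ∀ ν : MulChar F ℂ,
      ∑ n ∈ Finset.range 4, (ν⁻¹ * (A₄⁻¹) ^ n) a *
        gaussSum (ν * A₄ ^ ((n : ℤ) - 1)) ψ * gaussSum (ν * A₄ ^ (n : ℤ)) ψ =
      A₄ a ^ 3 * ∑ n ∈ Finset.range 4, (ν * A₄ ^ n)⁻¹ a *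
        gaussSum (ν * A₄ ^ n) ψ * gaussSum (ν * A₄ ^ (n + 1)) ψ := by
    intro ν
    set R : ℕ → ℂ := fun n => (ν⁻¹ * (A₄⁻¹) ^ n) a *
      gaussSum (ν * A₄ ^ ((n : ℤ) - 1)) ψ * gaussSum (ν * A₄ ^ (n : ℤ)) ψ with hR
    have hstep : ∀ n : ℕ, R (n + 1) = A₄ a ^ 3 * ((ν * A₄ ^ n)⁻¹ a *
        gaussSum (ν * A₄ ^ n) ψ * gaussSum (ν * A₄ ^ (n + 1)) ψ) := by
      intro n
      have e1 : ν⁻¹ * (A₄⁻¹) ^ (n + 1) = A₄⁻¹ * (ν * A₄ ^ n)⁻¹ := by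
        rw [mul_inv, pow_succ', inv_pow, mul_left_comm]
      have e2 : A₄ ^ (((n + 1 : ℕ) : ℤ) - 1) = A₄ ^ n := by
        rw [Nat.cast_succ, add_sub_cancel_right, zpow_natCast]
      simp only [hR]
      rw [e1, e2, zpow_natCast, MulChar.mul_apply, MulChar.inv_apply' A₄, quartic_inv hA ha]
      ring
    have hper : R 4 = R 0 := by
      have e1 : (A₄⁻¹) ^ 4 = (A₄⁻¹) ^ 0 := by rw [inv_pow, hA, inv_one, pow_zero]
      have e2 : A₄ ^ (((4 : ℕ) : ℤ)) = A₄ ^ (((0 : ℕ) : ℤ)) := by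
        rw [zpow_natCast, hA, zpow_natCast, pow_zero]
      simp only [hR]
      rw [e1, zpow_sub, e2, ← zpow_sub]
    rw [mul_sum, ← sum_congr rfl fun n _ => hstep n]
    simp only [sum_range_succ, range_zero, sum_empty, zero_add, Nat.reduceAdd, hper]
    ring
  have hsplit : ∑ m ∈ Finset.range 4, ∑ n ∈ Finset.range 4,
          ((ν₁ * ν₂)⁻¹ * (A₄⁻¹) ^ (m + n)) a *
            gaussSum (ν₁ * A₄ ^ ((n : ℤ) - 1)) ψ * gaussSum (ν₁ * A₄ ^ (n : ℤ)) ψ *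
            gaussSum (ν₂ * A₄ ^ ((m : ℤ) - 1)) ψ * gaussSum (ν₂ * A₄ ^ (m : ℤ)) ψ =
      (∑ n ∈ Finset.range 4, (ν₁⁻¹ * (A₄⁻¹) ^ n) a *
        gaussSum (ν₁ * A₄ ^ ((n : ℤ) - 1)) ψ * gaussSum (ν₁ * A₄ ^ (n : ℤ)) ψ) *
      (∑ m ∈ Finset.range 4, (ν₂⁻¹ * (A₄⁻¹) ^ m) a *
        gaussSum (ν₂ * A₄ ^ ((m : ℤ) - 1)) ψ * gaussSum (ν₂ * A₄ ^ (m : ℤ)) ψ) := by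
    rw [sum_mul_sum, sum_comm]
    refine sum_congr rfl fun n _ => sum_congr rfl fun m _ => ?_
    have e : (ν₁ * ν₂)⁻¹ * (A₄⁻¹) ^ (m + n) = (ν₁⁻¹ * (A₄⁻¹) ^ n) * (ν₂⁻¹ * (A₄⁻¹) ^ m) := by
      rw [mul_inv, add_comm, pow_add, mul_mul_mul_comm]
    rw [e, MulChar.mul_apply (ν₁⁻¹ * (A₄⁻¹) ^ n)]
    ring
  rw [hsplit, hshift, hshift, div_mul_eq_mul_div, eq_div_iff hq0]
  rw [hneg] at hT ⊢
  set S₁ := ∑ n ∈ Finset.range 4, (ν₁ * A₄ ^ n)⁻¹ a *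
        gaussSum (ν₁ * A₄ ^ n) ψ * gaussSum (ν₁ * A₄ ^ (n + 1)) ψ
  set S₂ := ∑ n ∈ Finset.range 4, (ν₂ * A₄ ^ n)⁻¹ a *
        gaussSum (ν₂ * A₄ ^ n) ψ * gaussSum (ν₂ * A₄ ^ (n + 1)) ψ
  set T := Tmel2 ψ A₄ a (ν₁ ^ 4) (ν₂ ^ 4)
  linear_combination A₄ (-1) * A₄ a ^ 7 * hT -
    T * (Fintype.card F : ℂ) * A₄ a ^ 8 * hm1 -
    T * (Fintype.card F : ℂ) * (A₄ a ^ 4 + 1) * hAa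
end

section
/- For every j ∈ F_q*, h(ε,j) = −2 + q·δ(j²,−1) + δ(j²,1), where δ(u,v) = 1 if u = v and 0 otherwise. -/
/-!
For the trivial character, `h(ε,j)` is the sum of `φ(1 - x) φ(u x + v)` over `x ≠ 0`, where
`u = (j + 1)²`, `v = (j - 1)²` and `φ = A₄²` is quadratic with `φ(-1) = 1`. Adding the term at
`x = 0`, which is `φ(v)`, gives a sum over the whole field. If `j = -1` then `u = 0` and that sum
vanishes. Otherwise `φ(u) = 1`, and it equals the sum of `φ(1 - x) φ(x + w)` with `w = v / u`
(`sum_quadratic_shift`): for `w = -1`, that is `j² = -1`, each nonzero term is `1` and the value is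
`q - 1`; for `w ≠ -1` an affine substitution turns it into the Jacobi sum `J(φ,φ) = -φ(-1) = -1`.
-/

open Finset

lemma quadratic_apply_sq {F : Type} [Field F] {χ : MulChar F ℂ} (h2 : χ ^ 2 = 1) {a : F}
    (ha : a ≠ 0) : χ a ^ 2 = 1 := by
  rw [← MulChar.pow_apply' χ two_ne_zero, h2, MulChar.one_apply ha.isUnit]

lemma sum_quadratic_shift {F : Type} [Field F] [Fintype F] [DecidableEq F] {χ : MulChar F ℂ}
    (h2 : χ ^ 2 = 1) (h1 : χ ≠ 1) (hneg : χ (-1) = 1) (w : F) :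
    ∑ x : F, χ (1 - x) * χ (x + w) = if w = -1 then (Fintype.card F : ℂ) - 1 else -1 := by
  split_ifs with hw
  · subst hw
    have hterm : ∀ x : F, χ (1 - x) * χ (x + -1) = 1 - if x = 1 then 1 else 0 := by
      intro x
      by_cases hx : x = 1
      · simp [hx, MulChar.map_zero]
      · have hx' : x + -1 ≠ 0 := fun h => hx (by linear_combination h)
        have : (1 : F) - x = -1 * (x + -1) := by ring
        rw [this, map_mul, hneg, one_mul, ← sq, quadratic_apply_sq h2 hx', if_neg hx, sub_zero]
    simp only [hterm, sum_sub_distrib]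
    simp
  · have hw' : 1 + w ≠ 0 := fun h => hw (by linear_combination h)
    have hinv : χ⁻¹ = χ := inv_eq_of_mul_eq_one_left (by rw [← sq, h2])
    have hJ := jacobiSum_nontrivial_inv h1
    rw [hinv, hneg, jacobiSum] at hJ
    rw [← hJ]
    -- The substitution `x = (1 + w) t - w` contributes the factor `χ (1 + w) ^ 2 = 1`.
    symm
    refine Fintype.sum_equiv ((Equiv.mulLeft₀ (1 + w) hw').trans (Equiv.subRight w)) _ _ ?_
    intro t
    have e1 : 1 - ((1 + w) * t - w) = (1 + w) * (1 - t) := by ring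
    have e2 : (1 + w) * t - w + w = (1 + w) * t := by ring
    change _ = χ (1 - ((1 + w) * t - w)) * χ ((1 + w) * t - w + w)
    rw [e1, e2, map_mul, map_mul]
    linear_combination (-(χ t * χ (1 - t))) * quadratic_apply_sq h2 hw'

/-- Evaluation of `h(ε,j)`. -/
theorem h_triv_eval
    (F : Type) [Field F] [Fintype F] [DecidableEq F]
    (hq : Fintype.card F % 4 = 1)
    (A₄ : MulChar F ℂ) (hA₄ : orderOf A₄ = 4) :
    ∀ j : F, j ≠ 0 →
      hKatz A₄ (1 : MulChar F ℂ) j =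
        -2 + (Fintype.card F : ℂ) * (if j ^ 2 = -1 then 1 else 0) +
          (if j ^ 2 = 1 then 1 else 0) := by
  intro j hj
  have h2F : (2 : F) ≠ 0 := by
    refine Ring.two_ne_zero fun h => ?_
    have := FiniteField.even_card_of_char_two h
    omega
  have h2 : (A₄ ^ 2) ^ 2 = 1 := by
    rw [← pow_mul, show 2 * 2 = orderOf A₄ from hA₄.symm, pow_orderOf_eq_one]
  have h1 : A₄ ^ 2 ≠ 1 := fun h => by
    have := orderOf_dvd_of_pow_eq_one h
    rw [hA₄] at this
    omega
  have hneg : (A₄ ^ 2) (-1) = 1 := by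
    rw [MulChar.pow_apply' _ two_ne_zero, ← map_pow, neg_one_sq, map_one]
  have hsum : hKatz A₄ 1 j = (∑ x : F, (A₄ ^ 2) (1 - x) * (A₄ ^ 2) (x * (j + 1) ^ 2 + (j - 1) ^ 2))
      - (A₄ ^ 2) ((j - 1) ^ 2) := by
    rw [hKatz, filter_ne', ← add_sum_erase univ _ (mem_univ (0 : F))]
    simp only [sub_zero, map_one, zero_mul, zero_add, one_mul, add_sub_cancel_left]
    refine sum_congr rfl fun x hx => ?_
    rw [MulChar.one_apply (ne_of_mem_erase hx).isUnit, inv_one, one_pow, one_mul, one_mul]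
  generalize A₄ ^ 2 = χ at *
  rw [hsum]
  by_cases hjm : j = -1
  · subst hjm
    have h4 : (-1 - 1 : F) ≠ 0 := fun h => h2F (by linear_combination -h)
    have h11 : (1 : F) ≠ -1 := fun h => h2F (by linear_combination h)
    have hS : ∑ x : F, χ (1 - x) = 0 := by
      rw [← MulChar.sum_eq_zero_of_ne_one h1]
      exact Fintype.sum_equiv (Equiv.subLeft 1) _ _ fun x => rfl
    simp only [neg_add_cancel, ne_eq, OfNat.ofNat_ne_zero, not_false_eq_true, zero_pow, mul_zero,
      zero_add, ← sum_mul, hS, zero_mul, map_pow, quadratic_apply_sq h2 h4, neg_one_sq,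
      if_neg h11, if_true]
    norm_num
  · have hu : j + 1 ≠ 0 := fun h => hjm (by linear_combination h)
    have hterm : ∀ x : F, χ (x * (j + 1) ^ 2 + (j - 1) ^ 2) =
        χ (x + (j - 1) ^ 2 / (j + 1) ^ 2) := by
      intro x
      have : x * (j + 1) ^ 2 + (j - 1) ^ 2 =
          (j + 1) ^ 2 * (x + (j - 1) ^ 2 / (j + 1) ^ 2) := by field_simp
      rw [this, map_mul, map_pow, quadratic_apply_sq h2 hu, one_mul]
    simp only [hterm, sum_quadratic_shift h2 h1 hneg]
    have hw : (j - 1) ^ 2 / (j + 1) ^ 2 = -1 ↔ j ^ 2 = -1 := by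
      rw [div_eq_iff (pow_ne_zero 2 hu)]
      constructor
      · intro h
        exact mul_left_cancel₀ h2F (by linear_combination h)
      · intro h
        linear_combination 2 * h
    simp only [hw]
    by_cases hj1 : j = 1
    · subst hj1
      have h11 : (1 : F) ≠ -1 := fun h => h2F (by linear_combination h)
      simp [h11, MulChar.map_zero]
      norm_num
    · have hv : j - 1 ≠ 0 := sub_ne_zero.mpr hj1
      have hsq : ¬ j ^ 2 = 1 := by
        intro h
        exact mul_ne_zero hv hu (by linear_combination h)
      rw [map_pow, quadratic_apply_sq h2 hv, if_neg hsq]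
      split_ifs <;> ring
end

section
/- For every j ∈ F_q*, h(A₄,j) = J(A₄,φ) − φ(j⁴ − 1) and h(A̅₄,j) = J(A̅₄,φ) − φ(j⁴ − 1). -/
/-!
For `D = A₄` or `D = A₄⁻¹` one has `D² = φ`, so `D⁻²φ` is trivial and `h(D,j)` is the Jacobi sum
`J(D,φ)` with the terms satisfying `x (j+1)² + (j-1)² = 0` removed. For `j = ±1` there is no such
nonzero `x`, and `φ(j⁴-1) = 0`. Otherwise the only one is `x₀ = -((j-1)/(j+1))²`, whose term is
`D(-1) φ(2) φ(j⁴-1)`. Finally `D(-1) φ(2) = D(-4) = 1`, because `-4 = (1+i)⁴` when `i² = -1`.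
-/

open Finset

section QuarticEval

variable {F : Type} [Field F] [Fintype F]

lemma two_ne_zero_of_card (hq : Fintype.card F % 4 = 1) : (2 : F) ≠ 0 := by
  apply Ring.two_ne_zero
  intro h
  have := FiniteField.even_card_of_char_two h
  omega

/-- `-4` is a fourth power, namely `(1+i)⁴`, so it is killed by characters of exponent 4. -/
lemma quartic_char_neg_four (hq : Fintype.card F % 4 = 1) (D : MulChar F ℂ) (hD : D ^ 4 = 1) :
    D (-1) * (D ^ 2) 2 = 1 := by
  have h2 := two_ne_zero_of_card hq
  obtain ⟨i, hi⟩ := (FiniteField.isSquare_neg_one_iff (F := F)).2 (by omega)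
  have h4 : (-1 : F) * 2 ^ 2 = (1 + i) ^ 4 := by linear_combination (i ^ 2 + 4 * i + 5) * hi
  have hu : (1 + i) ≠ 0 := by
    intro h
    rw [h] at h4
    exact h2 (by simpa using h4)
  rw [MulChar.pow_apply' D two_ne_zero, ← map_pow, ← map_mul, h4, map_pow,
    ← MulChar.pow_apply' D four_ne_zero, hD, MulChar.one_apply hu.isUnit]

/-- The evaluation for an arbitrary `D` with `D² = A₄²` and `D⁴ = 1`. -/
lemma hKatz_of_sq_eq [DecidableEq F] (hq : Fintype.card F % 4 = 1) (A₄ D : MulChar F ℂ)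
    (hD4 : D ^ 4 = 1) (hD : D ^ 2 = A₄ ^ 2) (j : F) :
    hKatz A₄ D j = Jsum D (A₄ ^ 2) - (A₄ ^ 2) (j ^ 4 - 1) := by
  have h2 := two_ne_zero_of_card hq
  have hone : (D⁻¹ ^ 2) * A₄ ^ 2 = 1 := by rw [← hD]; simp
  unfold hKatz Jsum
  rw [hone, ← hD, Finset.sum_filter_of_ne (by
    rintro x - hx rfl
    simp [MulChar.map_zero] at hx)]
  by_cases hj : j = 1 ∨ j = -1
  · have hz : j ^ 4 - 1 = 0 := by rcases hj with rfl | rfl <;> norm_num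
    rw [hz, MulChar.map_zero, sub_zero]
    refine Finset.sum_congr rfl fun x _ => ?_
    by_cases hx : x = 0
    · simp [hx, MulChar.map_zero]
    have hne : x * (j + 1) ^ 2 + (j - 1) ^ 2 ≠ 0 := by
      rcases hj with rfl | rfl
      · simp [hx, one_add_one_eq_two, h2]
      · have h : (-1 - 1 : F) = -2 := by ring
        simp [h, h2]
    rw [MulChar.one_apply hne.isUnit, mul_one]
  · push Not at hj
    have hp : j + 1 ≠ 0 := fun h => hj.2 (eq_neg_of_add_eq_zero_left h)
    set y : F := (j - 1) / (j + 1) with hy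
    have hterm : ∀ x : F, D x * (D ^ 2) (1 - x) * (1 : MulChar F ℂ) (x * (j + 1) ^ 2 + (j - 1) ^ 2)
        = D x * (D ^ 2) (1 - x)
          - if x = -y ^ 2 then D x * (D ^ 2) (1 - x) else 0 := by
      intro x
      have hfac : x * (j + 1) ^ 2 + (j - 1) ^ 2 = (x + y ^ 2) * (j + 1) ^ 2 := by
        rw [hy]; field_simp
      rw [hfac]
      split_ifs with hx
      · rw [hx]; simp [MulChar.map_zero]
      · have hne : (x + y ^ 2) * (j + 1) ^ 2 ≠ 0 :=
          mul_ne_zero (fun h => hx (eq_neg_of_add_eq_zero_left h)) (pow_ne_zero 2 hp)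
        rw [MulChar.one_apply hne.isUnit]; simp
    rw [Finset.sum_congr rfl fun x _ => hterm x, Finset.sum_sub_distrib,
      Finset.sum_ite_eq' Finset.univ (-y ^ 2)]
    simp only [Finset.mem_univ, if_true]
    congr 1
    have hsq : ∀ z : F, D (z ^ 2) = (D ^ 2) z := fun z => by
      rw [MulChar.pow_apply' D two_ne_zero, map_pow]
    -- The square class of `y (1 + y²)` is that of `2 (j⁴ - 1)`.
    have hval : y * (1 - -y ^ 2) = 2 * (j ^ 4 - 1) * ((j + 1)⁻¹ ^ 2) ^ 2 := by
      rw [hy]; field_simp; ring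
    have hone' : (D ^ 2) (((j + 1)⁻¹ ^ 2) ^ 2) = 1 := by
      have h := inv_ne_zero hp
      rw [← hsq, ← pow_mul, ← pow_mul, show 2 * 2 * 2 = 2 * 4 from rfl, pow_mul, map_pow,
        ← MulChar.pow_apply' D four_ne_zero, hD4, MulChar.one_apply (pow_ne_zero 2 h).isUnit]
    calc D (-y ^ 2) * (D ^ 2) (1 - -y ^ 2)
        = D (-1) * ((D ^ 2) (y * (1 - -y ^ 2))) := by
          rw [neg_eq_neg_one_mul (y ^ 2), map_mul D, hsq, map_mul (D ^ 2), mul_assoc]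
      _ = (D (-1) * (D ^ 2) 2) * (D ^ 2) (j ^ 4 - 1) := by
          rw [hval, map_mul, map_mul, hone', mul_one, mul_assoc]
      _ = (D ^ 2) (j ^ 4 - 1) := by rw [quartic_char_neg_four hq D hD4, one_mul]

end QuarticEval

/-- Evaluation of `h(A₄,j)` and `h(A̅₄,j)`. -/
theorem h_quartic_eval
    (F : Type) [Field F] [Fintype F] [DecidableEq F]
    (hq : Fintype.card F % 4 = 1)
    (A₄ : MulChar F ℂ) (hA₄ : orderOf A₄ = 4) :
    ∀ j : F, j ≠ 0 →
      hKatz A₄ A₄ j = Jsum A₄ (A₄ ^ 2) - (A₄ ^ 2) (j ^ 4 - 1) ∧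
      hKatz A₄ A₄⁻¹ j = Jsum A₄⁻¹ (A₄ ^ 2) - (A₄ ^ 2) (j ^ 4 - 1) := by
  intro j _
  have h4 : A₄ ^ 4 = 1 := hA₄ ▸ pow_orderOf_eq_one A₄
  refine ⟨hKatz_of_sq_eq hq A₄ A₄ h4 rfl j,
    hKatz_of_sq_eq hq A₄ A₄⁻¹ (by rw [inv_pow, h4, inv_one]) ?_ j⟩
  rw [inv_pow, inv_eq_iff_mul_eq_one, ← pow_add, h4]
end

section
/- For every multiplicative character D of F_q with D ∉ {ε, A₄, A̅₄}, one has ₂F₁(D, DA₄; A₄ | 1) = D̄(4) · G(D̄²) / ( G(D̄²φ) · G(φ) ), where 4 denotes the element 1+1+1+1 of F_q. -/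
/-!
At `x = 1` the hypergeometric sum collapses: the factors `D̄(y - 1)` and `D̄(1 - y)` combine, and
`q · ₂F₁(D, DA₄; A₄ | 1) = D(-1) J(DA₄, D̄²)`, where `J` is the Jacobi sum. Since `D ≠ A̅₄, A₄`,
the relation between Jacobi and Gauss sums and the reflection formula `G(χ) G(χ̄) = χ(-1) q` for
`χ = DA₄` reduce the claim to an evaluation of `G(D̄A₄) G(D̄A̅₄)`. With `χ = D̄A₄` this product is
`G(χ) G(χφ)`, so the quadratic Hasse–Davenport formula `G(χ) G(χφ) = χ̄(4) G(χ²) G(φ)`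
(`gaussSum_mul_gaussSum_quadratic`) applies. The two leftover signs `A₄(-1)` and `A₄(4)` agree
because `-4 = (1 + i)⁴` in `F`, with `i² = -1`.

The Hasse–Davenport formula follows from `J(χ, χ) = χ̄(4) J(φ, χ)` (`jacobiSum_self`), proved by
completing the square in `y (1 - y)` and using that `u` has `1 + φ(u)` square roots.
-/

open Finset

/-- A nontrivial multiplicative character with trivial square is the quadratic character, since
two nonsquares have a square product. -/
theorem eq_quadraticChar_of_sq_eq_one {F : Type} [Field F] [Fintype F] [DecidableEq F]
    {χ : MulChar F ℂ} (h1 : χ ≠ 1) (h2 : χ ^ 2 = 1) :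
    χ = (quadraticChar F).ringHomComp (Int.castRingHom ℂ) := by
  have hval (x : F) (hx : x ≠ 0) : χ x ^ 2 = 1 := by
    rw [← χ.pow_apply' two_ne_zero, h2, MulChar.one_apply (isUnit_iff_ne_zero.mpr hx)]
  have hsq (x : F) (hx : x ≠ 0) (hs : IsSquare x) : χ x = 1 := by
    obtain ⟨r, rfl⟩ := hs
    rw [map_mul, ← sq]
    exact hval r (by rintro rfl; simp at hx)
  obtain ⟨u, hu⟩ := MulChar.ne_one_iff.mp h1
  have hu' : χ u = -1 := (sq_eq_one_iff.mp (hval u u.ne_zero)).resolve_left hu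
  have hun : ¬ IsSquare (u : F) := fun h => hu (hsq u u.ne_zero h)
  ext a
  rw [MulChar.ringHomComp_apply]
  by_cases ha : IsSquare (a : F)
  · rw [hsq a a.ne_zero ha, (quadraticChar_one_iff_isSquare a.ne_zero).mpr ha]
    simp
  · have hau : IsSquare ((a : F) * u) := by
      rw [← quadraticChar_one_iff_isSquare (mul_ne_zero a.ne_zero u.ne_zero), map_mul,
        quadraticChar_neg_one_iff_not_isSquare.mpr ha,
        quadraticChar_neg_one_iff_not_isSquare.mpr hun]
      norm_num
    have h := hsq _ (mul_ne_zero a.ne_zero u.ne_zero) hau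
    rw [map_mul, hu'] at h
    rw [quadraticChar_neg_one_iff_not_isSquare.mpr ha]
    push_cast [eq_intCast]
    linear_combination -h

/-- Summing over `t` a function of `t²`: each `u` has `φ(u) + 1` square roots. -/
theorem sum_comp_sq_s18 {F : Type} [Field F] [Fintype F] [DecidableEq F] (hF : ringChar F ≠ 2)
    (f : F → ℂ) :
    ∑ t : F, f (t ^ 2) =
      ∑ u : F, ((quadraticChar F).ringHomComp (Int.castRingHom ℂ) u + 1) * f u := by
  rw [← Finset.sum_fiberwise' univ (fun t : F => t ^ 2) f]
  refine Finset.sum_congr rfl fun u _ => ?_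
  rw [Finset.sum_const, nsmul_eq_mul, MulChar.ringHomComp_apply]
  have h := quadraticChar_card_sqrts hF u
  have h' : (univ.filter fun t : F => t ^ 2 = u) = {x : F | x ^ 2 = u}.toFinset := by
    ext; simp
  rw [h']
  congr 1
  rw [eq_intCast]
  exact_mod_cast congrArg (Int.cast : ℤ → ℂ) h

/-- `J(χ, χ) = χ̄(4) J(φ, χ)`: substitute `y = (1 + t) / 2` in `∑ χ (y (1 - y))`. -/
theorem jacobiSum_self {F : Type} [Field F] [Fintype F] [DecidableEq F] (hF : ringChar F ≠ 2)
    {χ : MulChar F ℂ} (h1 : χ ≠ 1) :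
    jacobiSum χ χ = χ⁻¹ 4 *
      jacobiSum ((quadraticChar F).ringHomComp (Int.castRingHom ℂ)) χ := by
  have h2 : (2 : F) ≠ 0 := Ring.two_ne_zero hF
  have h4 : (4 : F) ≠ 0 := by
    have : (4 : F) = 2 * 2 := by norm_num
    rw [this]; exact mul_ne_zero h2 h2
  let e : F ≃ F := (Equiv.addLeft (1 : F)).trans (Equiv.mulLeft₀ (2 : F)⁻¹ (inv_ne_zero h2))
  have he (t : F) : e t = 2⁻¹ * (1 + t) := rfl
  have hsub : jacobiSum χ χ = χ⁻¹ 4 * ∑ t : F, χ (1 - t ^ 2) := by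
    rw [jacobiSum, ← e.sum_comp, Finset.mul_sum]
    refine Finset.sum_congr rfl fun t _ => ?_
    rw [← map_mul, MulChar.inv_apply', ← map_mul, he]
    congr 1
    field_simp
    ring
  have hzero : ∑ u : F, χ (1 - u) = 0 :=
     ((Equiv.subLeft (1 : F)).sum_comp (fun u => χ u)).trans
      (MulChar.sum_eq_zero_of_ne_one h1)
  rw [hsub, sum_comp_sq_s18 hF (fun u => χ (1 - u))]
  simp only [add_mul, one_mul, Finset.sum_add_distrib, hzero, add_zero]
  rfl

/-- The quadratic case of the Hasse–Davenport product formula. -/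
theorem gaussSum_mul_gaussSum_quadratic {F : Type} [Field F] [Fintype F] [DecidableEq F]
    (hF : ringChar F ≠ 2) {ψ : AddChar F ℂ} (hψ : ψ ≠ 1) {χ φ : MulChar F ℂ}
    (hφ : φ ≠ 1) (hφ2 : φ ^ 2 = 1) (h1 : χ ≠ 1) (h2 : χ * φ ≠ 1) :
    gaussSum χ ψ * gaussSum (χ * φ) ψ = χ⁻¹ 4 * gaussSum (χ ^ 2) ψ * gaussSum φ ψ := by
  have hφq := eq_quadraticChar_of_sq_eq_one hφ hφ2
  have hsq : χ * χ ≠ 1 := by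
    intro h
    -- otherwise `χ` would be the quadratic character as well
    apply h2
    rw [hφq, ← eq_quadraticChar_of_sq_eq_one h1 (by rw [sq, h]), h]
  have hcard : (Fintype.card F : ℂ) ≠ 0 := Nat.cast_ne_zero.mpr Fintype.card_ne_zero
  have hχ0 : gaussSum χ ψ ≠ 0 :=
    gaussSum_ne_zero_of_nontrivial hcard h1 (AddChar.IsPrimitive.of_ne_one hψ)
  have hJ := jacobiSum_self hF h1
  rw [← hφq] at hJ
  have e1 := jacobiSum_mul_nontrivial hsq ψ
  have e2 := jacobiSum_mul_nontrivial (mul_comm χ φ ▸ h2) ψ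
  rw [mul_comm φ χ] at e2
  rw [hJ] at e1
  rw [sq]
  apply mul_left_cancel₀ hχ0
  linear_combination (-gaussSum (χ * φ) ψ) * e1 + χ⁻¹ 4 * gaussSum (χ * χ) ψ * e2

/-- In a field containing a square root `i` of `-1`, `-4 = (1 + i)⁴`. -/
theorem quartic_apply_neg_four {F : Type} [Field F] [Fintype F] (hq : Fintype.card F % 4 = 1)
    (h4 : (4 : F) ≠ 0) {A : MulChar F ℂ} (hA : A ^ 4 = 1) : A (-1) * A 4 = 1 := by
  obtain ⟨i, hi⟩ := FiniteField.isSquare_neg_one_iff.mpr (by omega : Fintype.card F % 4 ≠ 3)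
  have h : (-1 : F) * 4 = (1 + i) ^ 4 := by
    linear_combination (i ^ 2 + 4 * i + 5) * hi
  have hne : (1 + i) ≠ 0 := by
    intro h0
    rw [h0] at h
    simp [h4] at h
  rw [← map_mul, h, map_pow, ← A.pow_apply' four_ne_zero, hA,
    MulChar.one_apply (isUnit_iff_ne_zero.mpr hne)]

/-- At argument `1` the hypergeometric sum is a Jacobi sum. -/
theorem hyp2F1_one_eq_jacobiSum {F : Type} [Field F] [Fintype F] [DecidableEq F]
    (A D : MulChar F ℂ) :
    hyp2F1 D (D * A) A (1 : F) =
      D (-1) / (Fintype.card F : ℂ) * jacobiSum (D * A) (D⁻¹ ^ 2) := by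
  have hB : (D * A)⁻¹ * A = D⁻¹ := by rw [mul_inv, inv_mul_cancel_right]
  rw [hyp2F1, hB, map_one, one_div, div_eq_inv_mul, mul_assoc, jacobiSum]
  congr 1
  rw [Finset.mul_sum]
  refine Finset.sum_congr rfl fun y _ => ?_
  have hy : y - 1 = (-1) * (1 - y) := by ring
  rw [hy, map_mul, one_mul, MulChar.pow_apply' _ two_ne_zero, MulChar.inv_apply' D (-1),
    inv_neg_one]
  ring

/-- Value of `₂F₁(D, DA₄; A₄ | 1)` for `D ∉ {ε, A₄, A̅₄}`. -/
theorem hyp2F1_at_one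
    (F : Type) [Field F] [Fintype F] [DecidableEq F]
    (hq : Fintype.card F % 4 = 1)
    (ψ : AddChar F ℂ) (hψ : ψ ≠ 1)
    (A₄ : MulChar F ℂ) (hA₄ : orderOf A₄ = 4)
    (D : MulChar F ℂ) (hD1 : D ≠ 1) (hD2 : D ≠ A₄) (hD3 : D ≠ A₄⁻¹) :
    hyp2F1 D (D * A₄) A₄ (1 : F) =
      D⁻¹ (4 : F) * gaussSum (D⁻¹ ^ 2) ψ /
        (gaussSum (D⁻¹ ^ 2 * A₄ ^ 2) ψ * gaussSum (A₄ ^ 2) ψ) := by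
  have hF : ringChar F ≠ 2 := by
    intro h
    have := FiniteField.even_card_iff_char_two.mp h
    omega
  have h2 : (2 : F) ≠ 0 := Ring.two_ne_zero hF
  have h4 : (4 : F) ≠ 0 := by
    have : (4 : F) = 2 * 2 := by norm_num
    rw [this]; exact mul_ne_zero h2 h2
  have hprim := AddChar.IsPrimitive.of_ne_one hψ
  have hcard : (Fintype.card F : ℂ) ≠ 0 := Nat.cast_ne_zero.mpr Fintype.card_ne_zero
  have hA4 : A₄ ^ 4 = 1 := hA₄ ▸ pow_orderOf_eq_one A₄
  have hφ : A₄ ^ 2 ≠ 1 := pow_ne_one_of_lt_orderOf two_ne_zero (by omega)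
  have hφ2 : (A₄ ^ 2) ^ 2 = 1 := by rw [← pow_mul]; exact hA4
  have hDA : D * A₄ ≠ 1 := fun h => hD3 (eq_inv_of_mul_eq_one_left h)
  have hχ : D⁻¹ * A₄ ≠ 1 := fun h => hD2 (inv_mul_eq_one.mp h)
  have hχφ_eq : D⁻¹ * A₄ * A₄ ^ 2 = (D * A₄)⁻¹ := by
    rw [eq_inv_iff_mul_eq_one, ← hA4]
    have : D⁻¹ * A₄ * A₄ ^ 2 * (D * A₄) = (D⁻¹ * D) * A₄ ^ 4 := by
      simp only [pow_succ, pow_zero, one_mul]; ac_rfl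
    rw [this, inv_mul_cancel, one_mul]
  have hχφ : D⁻¹ * A₄ * A₄ ^ 2 ≠ 1 := by rw [hχφ_eq]; exact inv_ne_one.mpr hDA
  have hprod : D * A₄ * D⁻¹ ^ 2 = D⁻¹ * A₄ := by
    rw [sq, mul_right_comm, ← mul_assoc, mul_inv_cancel, one_mul]
  have hG1 := gaussSum_ne_zero_of_nontrivial hcard hχ hprim
  have hG2 := gaussSum_ne_zero_of_nontrivial hcard hχφ hprim
  have eJ := jacobiSum_mul_nontrivial (φ := D⁻¹ ^ 2) (by rw [hprod]; exact hχ) ψ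
  rw [hprod] at eJ
  have eR := gaussSum_mul_gaussSum_eq_card hDA hprim
  have eR' := mul_gaussSum_inv_eq_gaussSum (D * A₄)⁻¹ ψ
  have eH := gaussSum_mul_gaussSum_quadratic hF hψ hφ hφ2 hχ hχφ
  have hsign := quartic_apply_neg_four hq h4 hA4
  rw [mul_pow] at eH
  have hinv : (D⁻¹ * A₄)⁻¹ (4 : F) = D 4 * (A₄ 4)⁻¹ := by
    rw [mul_inv, inv_inv, MulChar.mul_apply, MulChar.inv_apply_eq_inv']
  rw [hinv] at eH
  rw [MulChar.inv_apply', inv_neg_one, MulChar.mul_apply] at eR'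
  rw [hχφ_eq] at eH hG2
  have hD4 : D 4 ≠ 0 := (isUnit_iff_ne_zero.mpr h4).map D |>.ne_zero
  have hDD : D (-1) * D (-1) = 1 := by rw [← map_mul]; simp
  have hAA : A₄ (-1) * A₄ (-1) = 1 := by rw [← map_mul]; simp
  have hden : gaussSum (D⁻¹ ^ 2 * A₄ ^ 2) ψ * gaussSum (A₄ ^ 2) ψ ≠ 0 := by
    intro h0
    apply mul_ne_zero hG1 hG2
    rw [eH, mul_assoc, h0, mul_zero]
  rw [hyp2F1_one_eq_jacobiSum, eq_div_iff hden, MulChar.inv_apply_eq_inv']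
  have hA4inv : (A₄ 4)⁻¹ = A₄ (-1) := (eq_inv_of_mul_eq_one_left hsign).symm
  rw [hA4inv] at eH
  field_simp
  -- Successively: `A₄(-1)² = 1`, Hasse–Davenport, Jacobi to Gauss, and the reflection formula.
  linear_combination
    (-(D (-1) * jacobiSum (D * A₄) (D⁻¹ ^ 2) * gaussSum (D⁻¹ ^ 2 * A₄ ^ 2) ψ *
        gaussSum (A₄ ^ 2) ψ * D 4) +
      gaussSum (D * A₄)⁻¹ ψ⁻¹ * gaussSum (D * A₄) ψ * gaussSum (D⁻¹ ^ 2) ψ) * hAA -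
    D (-1) * A₄ (-1) * jacobiSum (D * A₄) (D⁻¹ ^ 2) * eH +
    D (-1) * A₄ (-1) * gaussSum (D * A₄)⁻¹ ψ * eJ -
    D (-1) * A₄ (-1) * gaussSum (D * A₄) ψ * gaussSum (D⁻¹ ^ 2) ψ * eR' +
    gaussSum (D * A₄)⁻¹ ψ⁻¹ * gaussSum (D * A₄) ψ * gaussSum (D⁻¹ ^ 2) ψ * A₄ (-1) ^ 2 * hDD +
    gaussSum (D⁻¹ ^ 2) ψ * eR
end
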